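/- arXiv:2204.01926 — 2 statements merged into one kernel-verified Lean document; each statement's English description precedes it below -/
import Mathlib

section
/- Let K be a convex body in ℝⁿ with B₂ⁿ ⊆ K, where B₂ⁿ is the closed Euclidean unit ball, and let r : ∂K → ℝ be the rolling function. Then for every t with 0 ≤ t ≤ 1 the set {x ∈ ∂K : r(x) ≥ t} is closed, and (1 − t)^{n−1} · H^{n−1}(∂K) ≤ H^{n−1}({x ∈ ∂K : r(x) ≥ t}), where H^{n−1} denotes the (n−1)-dimensional Hausdorff measure. -/
/-!
For a convex body `K`, let `Kₜ` be its inner parallel body: the centres of the balls of radius `t`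
contained in `K`. A boundary point `x` satisfies `r(x) ≥ t` iff its distance to `Kₜ` is at most `t`,
so the superlevel set is `∂K` intersected with a closed neighbourhood of `Kₜ`.

Nearest-point projections onto convex sets are contractions and hence do not increase Hausdorff
measure. Every point of `∂Kₜ` is the nearest point of `Kₜ` to some `x ∈ ∂K` with `r(x) ≥ t`,
so `{r ≥ t}` is at least as large as `∂Kₜ`. Since `K` contains the unit ball, `(1 - t) K ⊆ Kₜ`,
and projecting onto `(1 - t) K` shows that `∂Kₜ` is in turn at least as large as `∂((1 - t) K)`,
whose measure is `(1 - t)ⁿ⁻¹` times that of `∂K`. For `t = 1` the estimate has content only in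
dimension one, where every boundary point is touched by a unit ball.
-/

open MeasureTheory

/-- The rolling function of a convex body `K`:
`r(x) = sup {‖x − z‖ : z ∈ K and the closed ball around z of radius ‖x − z‖ is in K}`. -/
noncomputable def rollingFunction {n : ℕ} (K : Set (EuclideanSpace ℝ (Fin n)))
    (x : EuclideanSpace ℝ (Fin n)) : ℝ :=
  sSup {d : ℝ | ∃ z ∈ K, d = ‖x - z‖ ∧ Metric.closedBall z ‖x - z‖ ⊆ K}

open Metric Set
open scoped Pointwise NNReal

section Normal

variable {E : Type*} [NormedAddCommGroup E] [InnerProductSpace ℝ E]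

lemma norm_sub_le_norm_sub_of_inner_nonpos {a a' b b' : E}
    (h : inner ℝ (b - a) (a' - a) ≤ 0) (h' : inner ℝ (b' - a') (a - a') ≤ 0) :
    ‖a - a'‖ ≤ ‖b - b'‖ := by
  have hsq : ‖a - a'‖ ^ 2 ≤ inner ℝ (b - b') (a - a') := by
    have hexpand : inner ℝ (b - b') (a - a') - ‖a - a'‖ ^ 2 =
        -(inner ℝ (b - a) (a' - a) + inner ℝ (b' - a') (a - a')) := by
      rw [← real_inner_self_eq_norm_sq]
      simp only [inner_sub_left, inner_sub_right]
      ring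
    linarith
  have hcs : inner ℝ (b - b') (a - a') ≤ ‖b - b'‖ * ‖a - a'‖ := real_inner_le_norm _ _
  nlinarith [norm_nonneg (a - a'), norm_nonneg (b - b')]

lemma inner_nonpos_of_isMinOn_dist {C : Set E} (hC : Convex ℝ C) {a b c : E} (ha : a ∈ C)
    (hmin : IsMinOn (dist b) C a) (hc : c ∈ C) : inner ℝ (b - a) (c - a) ≤ 0 := by
  refine (norm_eq_iInf_iff_real_inner_le_zero hC ha).1 ?_ c hc
  simp only [← dist_eq_norm, hmin.iInf_eq ha]

lemma exists_ne_zero_forall_inner_nonpos [CompleteSpace E] {C : Set E} (hC : Convex ℝ C)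
    (hne : (interior C).Nonempty) {a : E} (ha : a ∉ interior C) :
    ∃ v : E, v ≠ 0 ∧ ∀ c ∈ closure C, inner ℝ v (c - a) ≤ 0 := by
  rw [← hC.interior_closure_eq_interior_of_nonempty_interior hne] at ha hne
  obtain ⟨f, hf0, hf⟩ := geometric_hahn_banach_of_nonempty_interior_point hC.closure ha hne
  refine ⟨(InnerProductSpace.toDual ℝ E).symm f, by simpa using hf0, fun c hc => ?_⟩
  simpa using hf c hc

variable [MeasurableSpace E] [BorelSpace E]

lemma hausdorffMeasure_le_of_forall_exists_inner_nonpos {A B : Set E}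
    (h : ∀ a ∈ A, ∃ b ∈ B, ∀ c ∈ A, inner ℝ (b - a) (c - a) ≤ 0) {d : ℝ} (hd : 0 ≤ d) :
    μH[d] A ≤ μH[d] B := by
  choose f hfB hf using fun a : A => h a a.2
  have hiso : Isometry (Subtype.val : A → E) := isometry_subtype_coe
  have hanti : AntilipschitzWith 1 f := AntilipschitzWith.of_le_mul_dist fun a a' => by
    simpa [Subtype.dist_eq, dist_eq_norm] using
      norm_sub_le_norm_sub_of_inner_nonpos (hf a a' a'.2) (hf a' a a.2)
  calc μH[d] A = μH[d] (univ : Set A) := by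
        rw [← hiso.hausdorffMeasure_image (.inl hd), image_univ, Subtype.range_coe]
    _ ≤ μH[d] (f '' univ) := by simpa using hanti.le_hausdorffMeasure_image hd univ
    _ ≤ μH[d] B := measure_mono (image_subset_iff.2 fun a _ => hfB a)

end Normal

section SurfaceMeasure

lemma frontier_smul₀ {G₀ α : Type*} [GroupWithZero G₀] [MulAction G₀ α] [TopologicalSpace α]
    [ContinuousConstSMul G₀ α] {c : G₀} (hc : c ≠ 0) (s : Set α) :
    frontier (c • s) = c • frontier s :=
  ((Homeomorph.smulOfNeZero c hc).image_frontier s).symm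

lemma exists_add_smul_mem_frontier {E : Type*} [NormedAddCommGroup E]
    [NormedSpace ℝ E] {M : Set E} (hM : Bornology.IsBounded M) {a v : E} (ha : a ∈ closure M)
    (hv : v ≠ 0) : ∃ s : ℝ, 0 ≤ s ∧ a + s • v ∈ frontier M := by
  let ray : ℝ≥0 → E := fun s => a + s • v
  have hray : Continuous ray := by fun_prop
  have hexit : ray ⁻¹' closure M ≠ univ := by
    intro huniv
    obtain ⟨R, hR⟩ := hM.closure.exists_norm_le
    have hR0 : 0 ≤ R := (norm_nonneg a).trans (hR a ha)
    let s : ℝ≥0 := ⟨(R + ‖a‖ + 1) / ‖v‖, by positivity⟩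
    have hray_le : ‖a + (s : ℝ) • v‖ ≤ R := hR _ (huniv ▸ mem_univ s : s ∈ ray ⁻¹' closure M)
    have hsv : ‖(s : ℝ) • v‖ = R + ‖a‖ + 1 := by
      rw [norm_smul, Real.norm_of_nonneg s.coe_nonneg]
      exact div_mul_cancel₀ _ (norm_ne_zero_iff.2 hv)
    have htri := norm_sub_le (a + (s : ℝ) • v) a
    rw [add_sub_cancel_left] at htri
    linarith
  obtain ⟨s, hs⟩ := nonempty_frontier_iff.2 ⟨⟨0, by simpa [ray] using ha⟩, hexit⟩
  exact ⟨s, s.2, frontier_closure_subset (hray.frontier_preimage_subset _ hs)⟩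

lemma hausdorffMeasure_frontier_mono {E : Type*} [NormedAddCommGroup E]
    [InnerProductSpace ℝ E] [CompleteSpace E] [MeasurableSpace E] [BorelSpace E] {L M : Set E}
    (hL : Convex ℝ L) (hne : (interior L).Nonempty) (hLM : L ⊆ M) (hM : Bornology.IsBounded M)
    {d : ℝ} (hd : 0 ≤ d) : μH[d] (frontier L) ≤ μH[d] (frontier M) := by
  refine hausdorffMeasure_le_of_forall_exists_inner_nonpos (fun a ha => ?_) hd
  obtain ⟨v, hv0, hv⟩ := exists_ne_zero_forall_inner_nonpos hL hne ha.2
  obtain ⟨s, hs, hmem⟩ := exists_add_smul_mem_frontier hM (closure_mono hLM ha.1) hv0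
  refine ⟨a + s • v, hmem, fun c hc => ?_⟩
  rw [add_sub_cancel_left, real_inner_smul_left]
  exact mul_nonpos_of_nonneg_of_nonpos hs (hv c hc.1)

end SurfaceMeasure

/-- The inner parallel body of `K` at distance `t`: the set of centres of the balls of radius `t`
contained in `K`. It is meant for `0 ≤ t`; balls of negative radius are empty. -/
def innerParallelBody {E : Type*} [PseudoMetricSpace E] (K : Set E) (t : ℝ) : Set E :=
  {z | closedBall z t ⊆ K}

section Metric

variable {E : Type*} [PseudoMetricSpace E] {K : Set E} {t : ℝ}

lemma innerParallelBody_subset (ht : 0 ≤ t) : innerParallelBody K t ⊆ K :=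
  fun _ hz => hz (mem_closedBall_self ht)

lemma le_dist_of_mem_innerParallelBody {x z : E} (hx : x ∉ interior K)
    (hz : z ∈ innerParallelBody K t) : t ≤ dist x z := by
  by_contra! hlt
  exact hx (interior_maximal (ball_subset_closedBall.trans hz) isOpen_ball hlt)

end Metric

section NormedSpace

variable {E : Type*} [NormedAddCommGroup E] [NormedSpace ℝ E] {K : Set E} {t : ℝ}

lemma isClosed_setOf_closedBall_subset {X : Type*} [TopologicalSpace X] {c : X → E} {r : X → ℝ}
    (hK : IsClosed K) (hc : Continuous c) (hr : Continuous r) (hr0 : ∀ x, 0 ≤ r x) :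
    IsClosed {x | closedBall (c x) (r x) ⊆ K} := by
  have heq : {x | closedBall (c x) (r x) ⊆ K} =
      ⋂ u ∈ closedBall (0 : E) 1, (fun x => c x + r x • u) ⁻¹' K := by
    ext x
    rw [mem_ofPred_eq, ← affinity_unitClosedBall (hr0 x)]
    simp [subset_def, mem_vadd_set, mem_smul_set]
  rw [heq]
  exact isClosed_biInter fun u _ => hK.preimage (by fun_prop)

lemma isClosed_innerParallelBody (hK : IsClosed K) (ht : 0 ≤ t) :
    IsClosed (innerParallelBody K t) :=
  isClosed_setOf_closedBall_subset hK continuous_id continuous_const fun _ => ht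

lemma isCompact_innerParallelBody (hK : IsCompact K) (ht : 0 ≤ t) :
    IsCompact (innerParallelBody K t) :=
  hK.of_isClosed_subset (isClosed_innerParallelBody hK.isClosed ht) (innerParallelBody_subset ht)

lemma convex_innerParallelBody (hK : Convex ℝ K) : Convex ℝ (innerParallelBody K t) := by
  intro x hx y hy a b ha hb hab v hv
  set w := v - (a • x + b • y) with hw
  have hmem {z : E} (hz : closedBall z t ⊆ K) : z + w ∈ K :=
    hz (by simpa [hw, dist_eq_norm] using hv)
  have hv_eq : v = a • (x + w) + b • (y + w) := by
    rw [smul_add, smul_add, add_add_add_comm, ← add_smul, hab, one_smul, hw, add_sub_cancel]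
  exact hv_eq ▸ hK (hmem hx) (hmem hy) ha hb hab

lemma one_sub_smul_subset_innerParallelBody (hK : Convex ℝ K) (hball : closedBall 0 1 ⊆ K)
    (ht0 : 0 ≤ t) (ht1 : t ≤ 1) : (1 - t) • K ⊆ innerParallelBody K t := by
  rintro _ ⟨y, hy, rfl⟩
  change closedBall _ _ ⊆ _
  rw [← affinity_unitClosedBall ht0]
  rintro _ ⟨_, ⟨u, hu, rfl⟩, rfl⟩
  exact hK hy (hball hu) (sub_nonneg.2 ht1) ht0 (sub_add_cancel 1 t)

lemma exists_mem_frontier_dist_le_of_mem_frontier_innerParallelBody [ProperSpace E]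
    (hK : IsClosed K) (ht : 0 ≤ t) {z : E} (hz : z ∈ frontier (innerParallelBody K t)) :
    ∃ x ∈ frontier K, dist x z ≤ t := by
  by_contra! hfar
  have hzK : closedBall z t ⊆ K := (isClosed_innerParallelBody hK ht).frontier_subset hz
  have hint : closedBall z t ⊆ interior K := fun v hv => by
    by_contra hvK
    exact (hfar v ⟨subset_closure (hzK hv), hvK⟩).not_ge hv
  obtain ⟨δ, hδ, hδK⟩ :=
    (isCompact_closedBall z t).exists_cthickening_subset_open isOpen_interior hint
  rw [cthickening_closedBall hδ.le ht] at hδK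
  refine hz.2 (mem_interior_iff_mem_nhds.2 (Filter.mem_of_superset (ball_mem_nhds z hδ) ?_))
  intro z' hz'
  exact (closedBall_subset_closedBall' (by linarith [mem_ball.1 hz'])).trans
    (hδK.trans interior_subset)

lemma frontier_subset_cthickening_innerParallelBody_of_finrank_eq_one
    (hE : Module.finrank ℝ E = 1) (hK : IsClosed K) (hconv : Convex ℝ K)
    (hball : closedBall 0 1 ⊆ K) : frontier K ⊆ cthickening 1 (innerParallelBody K 1) := by
  intro x hx
  have hnorm : 1 ≤ ‖x‖ := by simpa using le_dist_of_mem_innerParallelBody hx.2 hball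
  have hpos : 0 < ‖x‖ := one_pos.trans_le hnorm
  refine mem_cthickening_of_dist_le x (x - ‖x‖⁻¹ • x) _ _ (fun v hv => ?_) ?_
  · obtain ⟨c, rfl⟩ := exists_smul_eq_of_finrank_eq_one hE (norm_pos_iff.1 hpos) v
    have hv' : |c * ‖x‖ - ‖x‖ + 1| ≤ 1 := by
      calc |c * ‖x‖ - ‖x‖ + 1| = ‖(c - 1 + ‖x‖⁻¹) • x‖ := by
            rw [norm_smul, Real.norm_eq_abs, ← abs_of_pos hpos, ← abs_mul, abs_of_pos hpos]
            field_simp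
        _ = dist (c • x) (x - ‖x‖⁻¹ • x) := by
            rw [dist_eq_norm]
            congr 1
            module
        _ ≤ 1 := hv
    obtain ⟨hlower, hupper⟩ := abs_le.1 hv'
    obtain hc | hc := le_or_gt 0 c
    · refine hconv.smul_mem_of_zero_mem (hball (mem_closedBall_self zero_le_one))
        (hK.frontier_subset hx) ⟨hc, ?_⟩
      exact le_of_mul_le_mul_right (by linarith) hpos
    · refine hball (mem_closedBall_zero_iff.2 ?_)
      rw [norm_smul, Real.norm_of_nonpos hc.le]
      linarith
  · simp [norm_smul, hpos.ne']

end NormedSpace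

section InnerProductSpace

variable {E : Type*} [NormedAddCommGroup E] [InnerProductSpace ℝ E] [ProperSpace E]
  [MeasurableSpace E] [BorelSpace E] {K : Set E} {t d : ℝ}

lemma hausdorffMeasure_frontier_innerParallelBody_le (hK : IsClosed K) (hconv : Convex ℝ K)
    (ht : 0 ≤ t) (hd : 0 ≤ d) :
    μH[d] (frontier (innerParallelBody K t)) ≤
      μH[d] (frontier K ∩ cthickening t (innerParallelBody K t)) := by
  have hsub : frontier (innerParallelBody K t) ⊆ innerParallelBody K t :=
    (isClosed_innerParallelBody hK ht).frontier_subset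
  refine hausdorffMeasure_le_of_forall_exists_inner_nonpos (fun z hz => ?_) hd
  obtain ⟨x, hx, hxz⟩ := exists_mem_frontier_dist_le_of_mem_frontier_innerParallelBody hK ht hz
  have hmin : IsMinOn (dist x) (innerParallelBody K t) z := fun z' hz' =>
    hxz.trans (le_dist_of_mem_innerParallelBody hx.2 hz')
  exact ⟨x, ⟨hx, mem_cthickening_of_dist_le x z t _ (hsub hz) hxz⟩, fun z' hz' =>
    inner_nonpos_of_isMinOn_dist (convex_innerParallelBody hconv) (hsub hz) hmin (hsub hz')⟩

lemma ofReal_one_sub_rpow_mul_hausdorffMeasure_frontier_le (hK : IsCompact K)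
    (hconv : Convex ℝ K) (hball : closedBall 0 1 ⊆ K) (ht0 : 0 ≤ t) (ht1 : t < 1) (hd : 0 ≤ d) :
    ENNReal.ofReal ((1 - t) ^ d) * μH[d] (frontier K) ≤
      μH[d] (frontier K ∩ cthickening t (innerParallelBody K t)) := by
  have hpos : 0 < 1 - t := sub_pos.2 ht1
  have hne : (interior ((1 - t) • K)).Nonempty := by
    rw [interior_smul₀ hpos.ne']
    exact Set.Nonempty.smul_set
      ⟨0, interior_mono hball (ball_subset_interior_closedBall (mem_ball_self one_pos))⟩
  calc ENNReal.ofReal ((1 - t) ^ d) * μH[d] (frontier K)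
      = μH[d] (frontier ((1 - t) • K)) := by
        rw [frontier_smul₀ hpos.ne', Measure.hausdorffMeasure_smul₀ hd hpos.ne', ENNReal.smul_def,
          smul_eq_mul, ENNReal.coe_rpow_of_nonneg _ hd, ← ENNReal.ofReal_rpow_of_pos hpos,
          ← enorm_eq_nnnorm, Real.enorm_of_nonneg hpos.le]
    _ ≤ μH[d] (frontier (innerParallelBody K t)) :=
        hausdorffMeasure_frontier_mono (hconv.smul _) hne
          (one_sub_smul_subset_innerParallelBody hconv hball ht0 ht1.le)
          (isCompact_innerParallelBody hK ht0).isBounded hd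
    _ ≤ μH[d] (frontier K ∩ cthickening t (innerParallelBody K t)) :=
        hausdorffMeasure_frontier_innerParallelBody_le hK.isClosed hconv ht0 hd

end InnerProductSpace

section RollingFunction

variable {n : ℕ} {K : Set (EuclideanSpace ℝ (Fin n))} {t : ℝ} {x z : EuclideanSpace ℝ (Fin n)}

lemma norm_sub_le_rollingFunction (hK : Bornology.IsBounded K)
    (hball : closedBall z ‖x - z‖ ⊆ K) : ‖x - z‖ ≤ rollingFunction K x := by
  refine le_csSup ?_ ⟨z, hball (mem_closedBall_self (norm_nonneg _)), rfl, hball⟩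
  obtain ⟨R, hR⟩ := hK.exists_norm_le
  refine ⟨‖x‖ + R, ?_⟩
  rintro _ ⟨y, hy, rfl, -⟩
  exact (norm_sub_le x y).trans (by gcongr; exact hR y hy)

lemma exists_rollingFunction_eq_norm_sub (hK : IsCompact K) (hx : x ∈ K) :
    ∃ z, rollingFunction K x = ‖x - z‖ ∧ closedBall z ‖x - z‖ ⊆ K := by
  have hclosed : IsClosed {z | closedBall z ‖x - z‖ ⊆ K} :=
    isClosed_setOf_closedBall_subset hK.isClosed (by fun_prop) (by fun_prop) fun _ => norm_nonneg _
  have hradii : {d : ℝ | ∃ z ∈ K, d = ‖x - z‖ ∧ closedBall z ‖x - z‖ ⊆ K} =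
      (fun z => ‖x - z‖) '' (K ∩ {z | closedBall z ‖x - z‖ ⊆ K}) := by
    ext d
    simp only [mem_image, mem_inter_iff, mem_ofPred_eq]
    grind
  have hcompact : IsCompact {d : ℝ | ∃ z ∈ K, d = ‖x - z‖ ∧ closedBall z ‖x - z‖ ⊆ K} :=
    hradii ▸ (hK.inter_right hclosed).image (by fun_prop)
  obtain ⟨z, -, hz⟩ := hcompact.sSup_mem ⟨0, x, hx, by simp, by simpa using hx⟩
  exact ⟨z, hz⟩

lemma le_rollingFunction_iff (hK : IsCompact K) (ht : 0 ≤ t) (hx : x ∈ frontier K) :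
    t ≤ rollingFunction K x ↔ x ∈ cthickening t (innerParallelBody K t) := by
  rw [(isCompact_innerParallelBody hK ht).cthickening_eq_biUnion_closedBall ht, mem_iUnion₂]
  constructor
  · intro hle
    obtain ⟨z, hr, hball⟩ :=
      exists_rollingFunction_eq_norm_sub hK (hK.isClosed.frontier_subset hx)
    rw [hr, ← dist_eq_norm] at hle
    rw [← dist_eq_norm] at hball
    obtain ⟨y, hxy, hyz⟩ :=
      exists_dist_le_le ht (sub_nonneg.2 hle) (sub_add_cancel (dist x z) t).ge
    exact ⟨y, (closedBall_subset_closedBall' (by linarith)).trans hball, hxy⟩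
  · rintro ⟨z, hz, hxz⟩
    have hdist : ‖x - z‖ = t := by
      rw [← dist_eq_norm]
      exact le_antisymm hxz (le_dist_of_mem_innerParallelBody hx.2 hz)
    rw [← hdist]
    exact norm_sub_le_rollingFunction hK.isBounded (hdist ▸ hz)

end RollingFunction

/-- Schütt–Werner: for a convex body `K` containing the unit ball and `0 ≤ t ≤ 1`, the
set `{x ∈ ∂K : r(x) ≥ t}` is closed and its `(n−1)`-dimensional Hausdorff measure is at
least `(1−t)^{n−1}` times that of `∂K`. -/
theorem rollingFunction_superlevel_measure {n : ℕ}
    (K : Set (EuclideanSpace ℝ (Fin n))) (hKcomp : IsCompact K) (hKconv : Convex ℝ K)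
    (hKball : Metric.closedBall (0 : EuclideanSpace ℝ (Fin n)) 1 ⊆ K)
    (t : ℝ) (ht0 : 0 ≤ t) (ht1 : t ≤ 1) :
    IsClosed {x | x ∈ frontier K ∧ t ≤ rollingFunction K x} ∧
    ENNReal.ofReal ((1 - t) ^ (n - 1)) * μH[(n : ℝ) - 1] (frontier K)
      ≤ μH[(n : ℝ) - 1] {x | x ∈ frontier K ∧ t ≤ rollingFunction K x} := by
  have hset : {x | x ∈ frontier K ∧ t ≤ rollingFunction K x} =
      frontier K ∩ cthickening t (innerParallelBody K t) :=
    Set.ext fun x => and_congr_right (le_rollingFunction_iff hKcomp ht0)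
  rw [hset]
  refine ⟨isClosed_frontier.inter isClosed_cthickening, ?_⟩
  obtain rfl | hn := n.eq_zero_or_pos
  · simp
  rw [← Nat.cast_pred hn]
  obtain ht1 | rfl := ht1.lt_or_eq
  · simpa using ofReal_one_sub_rpow_mul_hausdorffMeasure_frontier_le hKcomp hKconv hKball ht0 ht1
      (n - 1).cast_nonneg
  obtain rfl | hn1 := Nat.eq_or_lt_of_le (Nat.succ_le_of_lt hn)
  · rw [inter_eq_left.2 (frontier_subset_cthickening_innerParallelBody_of_finrank_eq_one
      (by simp) hKcomp.isClosed hKconv hKball)]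
    simp
  · simp [(Nat.sub_pos_of_lt hn1).ne']
end

section
/- Let K be a convex body in ℝⁿ with B₂ⁿ ⊆ K, where B₂ⁿ is the closed Euclidean unit ball, and let r : ∂K → ℝ be the rolling function. Then for every α with 0 ≤ α < 1 the function x ↦ r(x)^{−α} is integrable on ∂K with respect to the (n−1)-dimensional Hausdorff measure; in particular ∫_{∂K} r(x)^{−α} dH^{n−1}(x) < ∞ (and r(x) > 0 for H^{n−1}-almost every x ∈ ∂K). -/
/-!
The metric projection onto a convex set does not increase distances, so surface area is monotone:
if a convex body `C` lies in a bounded set `D`, then every point of `∂C` is the projection of a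
point of `∂D`, whence `μH[d] (∂C) ≤ μH[d] (∂D)`. Comparison with a cube shows that `∂K` has
finite area.

If `K` contains a ball of radius `ρ` around `p`, then the inner parallel body `K_t` contains the
homothetic copy of `K` with centre `p` and ratio `1 - t / ρ`. Every `z ∈ ∂K_t` is at distance `t`
from some `x ∈ ∂K`; then `r x ≥ t`, and `z` is the projection of `x` onto `K_t`. Hence
`(1 - t / ρ) ^ (n - 1) * μH[n - 1] (∂K) ≤ μH[n - 1] (∂K_t) ≤ μH[n - 1] {x ∈ ∂K | t ≤ r x}`,
and by Bernoulli's inequality `{x ∈ ∂K | r x < t}` has area `O(t)`. The layer cake formula turns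
this tail bound into integrability of `r ^ (-α)` for `α < 1`.
-/

open MeasureTheory

open Set Metric Filter Asymptotics
open scoped Topology NNReal ENNReal

section MetricProjection

variable {E : Type*} [NormedAddCommGroup E] [InnerProductSpace ℝ E] {C D : Set E} {a b y z : E}

/-- `y` is the metric projection of `a` onto the convex set `C`, encoded by the condition that
`a - y` is an outer normal of `C` at `y` instead of by minimality of `dist a y`. -/
def IsMetricProjection (C : Set E) (a y : E) : Prop :=
  y ∈ C ∧ ∀ w ∈ C, inner ℝ (a - y) (w - y) ≤ 0

lemma isMetricProjection_of_forall_dist_le (hC : Convex ℝ C) (hy : y ∈ C)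
    (h : ∀ w ∈ C, dist a y ≤ dist a w) : IsMetricProjection C a y := by
  have : Nonempty C := ⟨⟨y, hy⟩⟩
  refine ⟨hy, (norm_eq_iInf_iff_real_inner_le_zero hC hy).1 (le_antisymm ?_ ?_)⟩
  · exact le_ciInf fun w => by simpa only [dist_eq_norm] using h w w.2
  · exact ciInf_le ⟨0, forall_mem_range.2 fun w : C => norm_nonneg (a - w)⟩ (⟨y, hy⟩ : C)

lemma IsMetricProjection.dist_le (hy : IsMetricProjection C a y) (hz : IsMetricProjection C b z) :
    dist y z ≤ dist a b := by
  have hyz := hy.2 z hz.1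
  have hzy := hz.2 y hy.1
  have hinner : ‖y - z‖ ^ 2 ≤ inner ℝ (a - b) (y - z) := by
    have hexpand : inner ℝ (a - b) (y - z) =
        ‖y - z‖ ^ 2 - inner ℝ (a - y) (z - y) - inner ℝ (b - z) (y - z) := by
      rw [← real_inner_self_eq_norm_sq, ← neg_sub y z, inner_neg_right, sub_neg_eq_add,
        ← inner_add_left, ← inner_sub_left]
      congr 1
      abel
    linarith
  have hcs := real_inner_le_norm (a - b) (y - z)
  rw [dist_eq_norm, dist_eq_norm]
  by_contra! hlt
  nlinarith [norm_nonneg (a - b)]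

lemma hausdorffMeasure_le_of_forall_isMetricProjection [MeasurableSpace E] [BorelSpace E]
    {A B : Set E} (h : ∀ y ∈ B, ∃ a ∈ A, IsMetricProjection C a y) {d : ℝ} (hd : 0 ≤ d) :
    μH[d] B ≤ μH[d] A := by
  choose g hgA hg using fun y : B => h y y.2
  have hanti : AntilipschitzWith 1 g := AntilipschitzWith.of_le_mul_dist fun y z => by
    simpa [Subtype.dist_eq] using (hg y).dist_le (hg z)
  calc μH[d] B = μH[d] (univ : Set B) := by
        rw [← (isometry_subtype_coe (s := B)).hausdorffMeasure_image (.inl hd), image_univ,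
          Subtype.range_coe]
    _ ≤ μH[d] (range g) := by simpa using hanti.le_hausdorffMeasure_image hd univ
    _ ≤ μH[d] A := measure_mono (range_subset_iff.2 hgA)

lemma exists_mem_frontier_isMetricProjection [CompleteSpace E] (hC : Convex ℝ C)
    (hCcl : IsClosed C) (hCint : (interior C).Nonempty) (hD : Bornology.IsBounded D) (hCD : C ⊆ D)
    (hy : y ∈ frontier C) : ∃ a ∈ frontier D, IsMetricProjection C a y := by
  rw [hCcl.frontier_eq] at hy
  obtain ⟨f, hf, hfC⟩ := geometric_hahn_banach_of_nonempty_interior_point hC hy.2 hCint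
  obtain ⟨u, rfl⟩ := (InnerProductSpace.toDual ℝ E).surjective f
  have hu : u ≠ 0 := by simpa using hf
  -- Follow an outer normal of `C` at `y` until it leaves `D`.
  let ray : ℝ≥0 → E := fun s => y + s • u
  have hray : Continuous ray := by fun_prop
  have hleaves : ray ⁻¹' D ≠ univ := by
    obtain ⟨R, hR⟩ := hD.exists_norm_le
    intro huniv
    have hbound (s : ℝ≥0) : s * ‖u‖ ≤ R + ‖y‖ :=
      calc s * ‖u‖ = ‖ray s - y‖ := by simp [ray, NNReal.smul_def, norm_smul]
        _ ≤ ‖ray s‖ + ‖y‖ := norm_sub_le _ _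
        _ ≤ R + ‖y‖ := by gcongr; exact hR _ (huniv ▸ mem_univ s : s ∈ ray ⁻¹' D)
    obtain ⟨k, hk⟩ := exists_nat_gt ((R + ‖y‖) / ‖u‖)
    exact (hbound k).not_gt ((div_lt_iff₀ (norm_pos_iff.2 hu)).1 hk)
  obtain ⟨s, hs⟩ : (frontier (ray ⁻¹' D)).Nonempty :=
    nonempty_frontier_iff.2 ⟨⟨0, by simpa [ray] using hCD hy.1⟩, hleaves⟩
  refine ⟨ray s, hray.frontier_preimage_subset D hs, hy.1, fun w hw => ?_⟩
  have hw : inner ℝ u w ≤ inner ℝ u y := hfC w hw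
  rw [add_sub_cancel_left, NNReal.smul_def, real_inner_smul_left, inner_sub_right]
  exact mul_nonpos_of_nonneg_of_nonpos s.2 (sub_nonpos.2 hw)

lemma hausdorffMeasure_frontier_mono_s10 [CompleteSpace E] [MeasurableSpace E] [BorelSpace E]
    (hC : Convex ℝ C) (hCcl : IsClosed C) (hCint : (interior C).Nonempty)
    (hD : Bornology.IsBounded D) (hCD : C ⊆ D) {d : ℝ} (hd : 0 ≤ d) :
    μH[d] (frontier C) ≤ μH[d] (frontier D) :=
  hausdorffMeasure_le_of_forall_isMetricProjection
    (fun _ => exists_mem_frontier_isMetricProjection hC hCcl hCint hD hCD) hd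

end MetricProjection

section InnerParallel

/-- The inner parallel set of `K` at distance `t`: the centres of the closed balls of radius `t`
contained in `K`. -/
def innerParallel {X : Type*} [PseudoMetricSpace X] (K : Set X) (t : ℝ) : Set X :=
  {z | closedBall z t ⊆ K}

lemma innerParallel_subset {X : Type*} [PseudoMetricSpace X] (K : Set X) {t : ℝ} (ht : 0 ≤ t) :
    innerParallel K t ⊆ K :=
  fun _ hz => hz (mem_closedBall_self ht)

lemma le_dist_of_mem_frontier_of_mem_innerParallel {X : Type*} [PseudoMetricSpace X]
    {K : Set X} {t : ℝ} {x z : X}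
    (hx : x ∈ frontier K) (hz : z ∈ innerParallel K t) : t ≤ dist x z := by
  by_contra! hlt
  exact hx.2 (interior_maximal (ball_subset_closedBall.trans hz) isOpen_ball hlt)

variable {E : Type*}

lemma innerParallel_eq_iInter [SeminormedAddCommGroup E] (K : Set E) (t : ℝ) :
    innerParallel K t = ⋂ v ∈ closedBall (0 : E) t, (fun z => z + v) ⁻¹' K := by
  ext z
  rw [innerParallel, mem_ofPred_eq, ← vadd_closedBall_zero, ← image_vadd, image_subset_iff]
  simp only [subset_def, vadd_eq_add, mem_preimage, mem_iInter]

lemma isClosed_innerParallel [SeminormedAddCommGroup E] {K : Set E} (hK : IsClosed K) (t : ℝ) :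
    IsClosed (innerParallel K t) := by
  rw [innerParallel_eq_iInter]
  exact isClosed_biInter fun v _ => hK.preimage (by fun_prop)

lemma convex_innerParallel [SeminormedAddCommGroup E] [NormedSpace ℝ E] {K : Set E}
    (hK : Convex ℝ K) (t : ℝ) : Convex ℝ (innerParallel K t) := by
  rw [innerParallel_eq_iInter]
  exact convex_iInter₂ fun v _ => hK.translate_preimage_left v

lemma isHomeomorph_homothety [SeminormedAddCommGroup E] [NormedSpace ℝ E] (p : E) {c : ℝ}
    (hc : c ≠ 0) : IsHomeomorph (AffineMap.homothety p c) where
  continuous := AffineMap.homothety_continuous p c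
  isOpenMap := AffineMap.homothety_isOpenMap p c hc
  bijective := (AffineEquiv.homothetyUnitsMulHom p (Units.mk0 c hc)).bijective

lemma homothety_image_subset_innerParallel [NormedAddCommGroup E] [NormedSpace ℝ E] {K : Set E}
    (hK : Convex ℝ K) {p : E} {ρ t : ℝ} (hball : closedBall p ρ ⊆ K) (ht0 : 0 < t) (htρ : t ≤ ρ) :
    AffineMap.homothety p (1 - t / ρ) '' K ⊆ innerParallel K t := by
  have hρ : 0 < ρ := ht0.trans_le htρ
  rw [innerParallel_eq_iInter]
  rintro _ ⟨k, hk, rfl⟩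
  simp only [mem_iInter, mem_closedBall_zero_iff, mem_preimage]
  intro v hv
  have hw : p + (ρ / t) • v ∈ K := hball <| by
    rw [add_mem_closedBall_iff_norm, norm_smul, Real.norm_of_nonneg (by positivity)]
    calc ρ / t * ‖v‖ ≤ ρ / t * t := by gcongr
      _ = ρ := div_mul_cancel₀ _ ht0.ne'
  have hcomb := hK hk hw (sub_nonneg.2 ((div_le_one hρ).2 htρ)) (by positivity)
    (sub_add_cancel 1 (t / ρ))
  -- `p + (1 - t / ρ) • (k - p) + v = (1 - t / ρ) • k + (t / ρ) • (p + (ρ / t) • v)`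
  convert hcomb using 1
  rw [AffineMap.homothety_apply, smul_add, smul_smul, div_mul_div_cancel₀ hρ.ne', div_self ht0.ne',
    vsub_eq_sub, vadd_eq_add]
  module

lemma innerParallel_interior_subset [SeminormedAddCommGroup E] [NormedSpace ℝ E] [ProperSpace E]
    {K : Set E} {t : ℝ} (ht : 0 ≤ t) :
    innerParallel (interior K) t ⊆ interior (innerParallel K t) := by
  intro z hz
  obtain ⟨δ, hδ, hsub⟩ :=
    (isCompact_closedBall z t).exists_cthickening_subset_open isOpen_interior hz
  rw [cthickening_closedBall hδ.le ht] at hsub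
  refine interior_maximal (fun w hw => ?_) isOpen_ball (mem_ball_self hδ)
  refine (closedBall_subset_closedBall' ?_).trans (hsub.trans interior_subset)
  rw [add_comm]
  gcongr
  exact (mem_ball.1 hw).le

lemma exists_mem_frontier_dist_eq_of_mem_frontier_innerParallel [SeminormedAddCommGroup E]
    [NormedSpace ℝ E] [ProperSpace E] {K : Set E} (hK : IsClosed K) {t : ℝ} (ht : 0 ≤ t) {z : E}
    (hz : z ∈ frontier (innerParallel K t)) :
    ∃ x ∈ frontier K, dist x z = t := by
  rw [(isClosed_innerParallel hK t).frontier_eq] at hz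
  obtain ⟨x, hxz, hxK⟩ := not_subset.1 fun h => hz.2 (innerParallel_interior_subset ht h)
  have hx : x ∈ frontier K := hK.frontier_eq ▸ ⟨hz.1 hxz, hxK⟩
  exact ⟨x, hx, le_antisymm hxz (le_dist_of_mem_frontier_of_mem_innerParallel hx hz.1)⟩

lemma isMetricProjection_innerParallel [NormedAddCommGroup E] [InnerProductSpace ℝ E] {K : Set E}
    (hK : Convex ℝ K) {x z : E} (hx : x ∈ frontier K) (hz : z ∈ innerParallel K (dist x z)) :
    IsMetricProjection (innerParallel K (dist x z)) x z :=
  isMetricProjection_of_forall_dist_le (convex_innerParallel hK _) hz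
    fun _ hw => le_dist_of_mem_frontier_of_mem_innerParallel hx hw

end InnerParallel

section FrontierFinite

lemma hausdorffMeasure_sphere_pi_lt_top {m : ℕ} (c : Fin (m + 1) → ℝ) (R : ℝ) :
    μH[(m : ℝ)] (sphere c R) < ∞ := by
  let face (i : Fin (m + 1)) (a : ℝ) : Set (Fin (m + 1) → ℝ) :=
    i.insertNth (α := fun _ => ℝ) a '' closedBall (i.removeNth c) R
  have hface (i a) : μH[(m : ℝ)] (face i a) < ∞ := by
    have hiso : Isometry (i.insertNth (α := fun _ => ℝ) a) :=
      Isometry.of_dist_eq fun x y => by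
        rw [Fin.dist_insertNth_insertNth, dist_self, max_eq_right dist_nonneg]
    have hvol : (μH[(m : ℝ)] : Measure (Fin m → ℝ)) = volume := by
      simpa using hausdorffMeasure_pi_real (ι := Fin m)
    rw [hiso.hausdorffMeasure_image (.inl m.cast_nonneg), hvol]
    exact measure_closedBall_lt_top
  have hcover : sphere c R ⊆ ⋃ i, face i (c i + R) ∪ face i (c i - R) := by
    intro x hx
    have hmem (i) : x ∈ face i (x i) :=
      ⟨i.removeNth x, (dist_pi_le_iff (dist_nonneg.trans_eq hx)).2 fun j =>
        (dist_le_pi_dist x c _).trans_eq hx, i.insertNth_self_removeNth x⟩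
    obtain ⟨i, hi⟩ : ∃ i, dist (x i) (c i) = R := by
      obtain ⟨i, hi⟩ := Finite.exists_max fun i => dist (x i) (c i)
      refine ⟨i, le_antisymm ((dist_le_pi_dist x c i).trans_eq hx) ?_⟩
      exact hx.symm.trans_le ((dist_pi_le_iff dist_nonneg).2 hi)
    refine mem_iUnion.2 ⟨i, ?_⟩
    rcases abs_eq (dist_nonneg.trans_eq hi) |>.1 (Real.dist_eq (x i) (c i) ▸ hi) with h | h
    · exact .inl (sub_eq_iff_eq_add'.1 h ▸ hmem i)
    · exact .inr ((sub_eq_iff_eq_add'.1 h).trans (sub_eq_add_neg _ _).symm ▸ hmem i)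
  refine (measure_mono hcover).trans_lt ((measure_iUnion_fintype_le _ _).trans_lt ?_)
  exact ENNReal.sum_lt_top.2 fun i _ => measure_union_lt_top (hface i _) (hface i _)

lemma hausdorffMeasure_frontier_lt_top {m : ℕ} {K : Set (EuclideanSpace ℝ (Fin (m + 1)))}
    (hK : IsCompact K) (hKconv : Convex ℝ K) (hKint : (interior K).Nonempty) :
    μH[(m : ℝ)] (frontier K) < ∞ := by
  let e := PiLp.homeomorph 2 fun _ : Fin (m + 1) => ℝ
  obtain ⟨R, hR, hKR⟩ := (hK.image e.continuous).isBounded.subset_closedBall_lt 0 0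
  have hcube : IsCompact (e ⁻¹' closedBall 0 R) :=
    e.isCompact_preimage.2 (isCompact_closedBall 0 R)
  calc μH[(m : ℝ)] (frontier K)
      ≤ μH[(m : ℝ)] (frontier (e ⁻¹' closedBall 0 R)) :=
        hausdorffMeasure_frontier_mono_s10 hKconv hK.isClosed hKint hcube.isBounded
          (image_subset_iff.1 hKR) m.cast_nonneg
    _ = μH[(m : ℝ)] (e.symm '' sphere 0 R) := by
        rw [← e.preimage_frontier, frontier_closedBall 0 hR.ne', e.image_symm]
    _ ≤ _ := (PiLp.lipschitzWith_toLp 2 _).hausdorffMeasure_image_le m.cast_nonneg _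
    _ < ∞ := ENNReal.mul_lt_top (ENNReal.rpow_lt_top_of_nonneg m.cast_nonneg ENNReal.coe_ne_top)
        (hausdorffMeasure_sphere_pi_lt_top 0 R)

end FrontierFinite

section Tail

variable {X : Type*} [MeasurableSpace X] {μ : Measure X} [IsFiniteMeasure μ] {f : X → ℝ}
  {α β : ℝ}

lemma ae_pos_of_isBigO_measureReal_lt (hβ : 0 < β)
    (h : (fun t => μ.real {x | f x < t}) =O[𝓝[>] 0] fun t => t ^ β) : ∀ᵐ x ∂μ, 0 < f x := by
  have hpow : Tendsto (fun t : ℝ => t ^ β) (𝓝[>] 0) (𝓝 0) := by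
    simpa [hβ.ne'] using
      (Real.continuousAt_rpow_const 0 β (.inr hβ.le)).tendsto.mono_left nhdsWithin_le_nhds
  refine (measureReal_eq_zero_iff).1 (le_antisymm (ge_of_tendsto (h.trans_tendsto hpow) ?_)
    measureReal_nonneg)
  filter_upwards [self_mem_nhdsWithin] with t ht
  exact measureReal_mono fun x (hx : ¬0 < f x) => (not_lt.1 hx).trans_lt ht

lemma isBigO_measureReal_lt_inv
    (h : (fun t => μ.real {x | f x < t}) =O[𝓝[>] 0] fun t => t ^ β) :
    (fun t => μ.real {x | t < (f x)⁻¹}) =O[atTop] fun t => t ^ (-β) := by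
  refine (IsBigO.of_bound' ?_).trans
    ((h.comp_tendsto tendsto_inv_atTop_nhdsGT_zero).congr' .rfl ?_)
  · filter_upwards [eventually_gt_atTop 0] with t ht
    simp only [Function.comp_apply, Real.norm_of_nonneg measureReal_nonneg]
    exact measureReal_mono fun x hx => (lt_inv_comm₀ ht (inv_pos.1 (ht.trans hx))).1 hx
  · filter_upwards [eventually_gt_atTop 0] with t ht
    simp [Real.inv_rpow ht.le, Real.rpow_neg ht.le]

lemma integrable_rpow_neg_of_isBigO_measureReal_lt (hf : AEMeasurable f μ)
    (h : (fun t => μ.real {x | f x < t}) =O[𝓝[>] 0] fun t => t ^ β) (hα : 0 < α) (hαβ : α < β) :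
    Integrable (fun x => f x ^ (-α)) μ := by
  let tail : ℝ → ℝ := fun t => μ.real {x | t < (f x)⁻¹}
  have htail_anti : Antitone tail := fun s t hst =>
    measureReal_mono fun x hx => hst.trans_lt hx
  have htail_zero : tail =O[𝓝[>] 0] (· ^ (-0 : ℝ)) := by
    refine IsBigO.of_bound (μ.real univ) (.of_forall fun t => ?_)
    simpa [tail, abs_of_nonneg measureReal_nonneg] using
      measureReal_mono (μ := μ) (subset_univ {x | t < (f x)⁻¹})
  have hlayer := mellin_convergent_of_isBigO_scalar
    (htail_anti.locallyIntegrable.locallyIntegrableOn _) (isBigO_measureReal_lt_inv h) hαβ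
    htail_zero hα
  have hfinv : ∀ᵐ x ∂μ, 0 ≤ (f x)⁻¹ :=
    (ae_pos_of_isBigO_measureReal_lt (hα.trans hαβ) h).mono fun x hx => (inv_pos.2 hx).le
  simp only [Real.rpow_neg_eq_inv_rpow]
  refine ⟨(hf.inv.pow_const α).aestronglyMeasurable, ?_⟩
  rw [hasFiniteIntegral_iff_ofReal (hfinv.mono fun x hx => Real.rpow_nonneg hx α),
    lintegral_rpow_eq_lintegral_meas_lt_mul μ hfinv hf.inv hα]
  refine ENNReal.mul_lt_top ENNReal.ofReal_lt_top (lt_of_eq_of_lt ?_ hlayer.lintegral_lt_top)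
  refine setLIntegral_congr_fun measurableSet_Ioi fun t ht => ?_
  rw [mul_comm, ENNReal.ofReal_mul (Real.rpow_nonneg (le_of_lt ht) _), ofReal_measureReal]

end Tail

section RollingFunction

/-- The centres of the closed balls that are contained in `K` and whose boundary sphere passes
through `x`; for `x ∈ K` the degenerate ball of radius `0` makes `x` itself such a centre. -/
def rollingCenters {X : Type*} [PseudoMetricSpace X] (K : Set X) (x : X) : Set X :=
  {z | z ∈ innerParallel K (dist x z)}

lemma rollingCenters_subset {X : Type*} [PseudoMetricSpace X] (K : Set X) (x : X) :
    rollingCenters K x ⊆ K :=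
  fun _ hz => innerParallel_subset K dist_nonneg hz

lemma isClosed_setOf_mem_rollingCenters {E : Type*} [NormedAddCommGroup E] [NormedSpace ℝ E]
    {K : Set E} (hK : IsClosed K) : IsClosed {q : E × E | q.2 ∈ rollingCenters K q.1} := by
  have hmem (q : E × E) : q.2 ∈ rollingCenters K q.1 ↔
      ∀ v ∈ closedBall (0 : E) 1, q.2 + dist q.1 q.2 • v ∈ K := by
    rw [rollingCenters, mem_ofPred_eq, innerParallel, mem_ofPred_eq,
      ← affinity_unitClosedBall dist_nonneg q.2, ← image_smul, ← image_vadd, image_image,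
      image_subset_iff]
    rfl
  simp only [hmem, ofPred_forall]
  exact isClosed_biInter fun v _ => hK.preimage (by fun_prop)

variable {n : ℕ} {K : Set (EuclideanSpace ℝ (Fin n))} {x z : EuclideanSpace ℝ (Fin n)}

lemma rollingFunction_eq_sSup_image (K : Set (EuclideanSpace ℝ (Fin n)))
    (x : EuclideanSpace ℝ (Fin n)) :
    rollingFunction K x = sSup (dist x '' rollingCenters K x) := by
  rw [rollingFunction]
  congr 1
  ext d
  constructor
  · rintro ⟨z, -, rfl, hz⟩
    exact ⟨z, by rwa [← dist_eq_norm] at hz, dist_eq_norm x z⟩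
  · rintro ⟨z, hz, rfl⟩
    exact ⟨z, rollingCenters_subset K x hz, dist_eq_norm x z, dist_eq_norm x z ▸ hz⟩

lemma rollingFunction_nonneg (K : Set (EuclideanSpace ℝ (Fin n)))
    (x : EuclideanSpace ℝ (Fin n)) : 0 ≤ rollingFunction K x := by
  rw [rollingFunction_eq_sSup_image]
  exact Real.sSup_nonneg (forall_mem_image.2 fun _ _ => dist_nonneg)

lemma isCompact_dist_image_rollingCenters (hK : IsCompact K) (x : EuclideanSpace ℝ (Fin n)) :
    IsCompact (dist x '' rollingCenters K x) := by
  have hclosed : IsClosed (rollingCenters K x) :=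
    (isClosed_setOf_mem_rollingCenters hK.isClosed).preimage
      (by fun_prop : Continuous fun z => (x, z))
  exact (hK.of_isClosed_subset hclosed (rollingCenters_subset K x)).image (by fun_prop)

lemma dist_le_rollingFunction (hK : IsCompact K) (hz : z ∈ rollingCenters K x) :
    dist x z ≤ rollingFunction K x := by
  rw [rollingFunction_eq_sSup_image]
  exact le_csSup (isCompact_dist_image_rollingCenters hK x).bddAbove (mem_image_of_mem _ hz)

lemma exists_mem_rollingCenters_dist_eq (hK : IsCompact K) (hx : x ∈ K) :
    ∃ z ∈ rollingCenters K x, dist x z = rollingFunction K x := by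
  rw [rollingFunction_eq_sSup_image]
  exact (isCompact_dist_image_rollingCenters hK x).sSup_mem
    (.image _ ⟨x, by simpa [rollingCenters, innerParallel] using hx⟩)

lemma rollingFunction_le_diam (hK : IsCompact K) (hx : x ∈ K) : rollingFunction K x ≤ diam K := by
  obtain ⟨z, hz, hzx⟩ := exists_mem_rollingCenters_dist_eq hK hx
  exact hzx ▸ dist_le_diam_of_mem hK.isBounded hx (rollingCenters_subset K x hz)

lemma upperSemicontinuousOn_rollingFunction (hK : IsCompact K) :
    UpperSemicontinuousOn (rollingFunction K) K := by
  rw [upperSemicontinuousOn_iff_preimage_Ici]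
  intro t
  have hcompact : IsCompact ((K ×ˢ K) ∩
      ({q | q.2 ∈ rollingCenters K q.1} ∩ {q | t ≤ dist q.1 q.2})) :=
    (hK.prod hK).inter_right ((isClosed_setOf_mem_rollingCenters hK.isClosed).inter
      (isClosed_le continuous_const continuous_dist))
  refine ⟨_, (hcompact.image continuous_fst).isClosed, ?_⟩
  ext x
  refine and_congr_right fun hx => ⟨fun ht => ?_, ?_⟩
  · obtain ⟨z, hz, hzx⟩ := exists_mem_rollingCenters_dist_eq hK hx
    exact ⟨(x, z), ⟨⟨hx, rollingCenters_subset K x hz⟩, hz, ht.trans_eq hzx.symm⟩, rfl⟩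
  · rintro ⟨⟨x, z⟩, ⟨_, hz, ht⟩, rfl⟩
    exact le_trans (mem_ofPred.1 ht) (dist_le_rollingFunction hK hz)

lemma aemeasurable_rollingFunction (hK : IsCompact K) (μ : Measure (EuclideanSpace ℝ (Fin n))) :
    AEMeasurable (rollingFunction K) (μ.restrict (frontier K)) :=
  aemeasurable_restrict_of_measurable_subtype isClosed_frontier.measurableSet
    (upperSemicontinuousOn_iff_restrict.2
      ((upperSemicontinuousOn_rollingFunction hK).mono hK.isClosed.frontier_subset)).measurable

lemma rpow_mul_hausdorffMeasure_frontier_le (hK : IsCompact K) (hKconv : Convex ℝ K)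
    {p : EuclideanSpace ℝ (Fin n)} {ρ t : ℝ} (hball : closedBall p ρ ⊆ K) (ht0 : 0 < t)
    (htρ : t < ρ) {d : ℝ} (hd : 0 ≤ d) :
    ENNReal.ofReal (1 - t / ρ) ^ d * μH[d] (frontier K) ≤
      μH[d] (frontier K ∩ {x | t ≤ rollingFunction K x}) := by
  have hρ : 0 < ρ := ht0.trans htρ
  have hc : 0 < 1 - t / ρ := sub_pos.2 ((div_lt_one hρ).2 htρ)
  have hhom := isHomeomorph_homothety p hc.ne'
  set φ := AffineMap.homothety p (1 - t / ρ)
  have hint : (interior (φ '' K)).Nonempty := by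
    rw [← hhom.image_interior]
    refine .image _ ⟨p, interior_mono hball ?_⟩
    simpa [interior_closedBall p hρ.ne']
  calc ENNReal.ofReal (1 - t / ρ) ^ d * μH[d] (frontier K)
      = μH[d] (frontier (φ '' K)) := by
        rw [← hhom.image_frontier, hausdorffMeasure_homothety_image hd p hc.ne', ENNReal.smul_def,
          smul_eq_mul, ENNReal.coe_rpow_of_nonneg _ hd, ← enorm_eq_nnnorm,
          Real.enorm_of_nonneg hc.le]
    _ ≤ μH[d] (frontier (innerParallel K t)) :=
        hausdorffMeasure_frontier_mono_s10 (hKconv.affine_image φ)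
          (hK.image hhom.continuous).isClosed hint
          (hK.isBounded.subset (innerParallel_subset K ht0.le))
          (homothety_image_subset_innerParallel hKconv hball ht0 htρ.le) hd
    _ ≤ μH[d] (frontier K ∩ {x | t ≤ rollingFunction K x}) := by
        refine hausdorffMeasure_le_of_forall_isMetricProjection (C := innerParallel K t)
          (fun z hz => ?_) hd
        obtain ⟨x, hx, rfl⟩ :=
          exists_mem_frontier_dist_eq_of_mem_frontier_innerParallel hK.isClosed ht0.le hz
        have hzK := (isClosed_innerParallel hK.isClosed _).frontier_subset hz
        exact ⟨x, ⟨hx, dist_le_rollingFunction hK hzK⟩,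
          isMetricProjection_innerParallel hKconv hx hzK⟩

lemma isBigO_measureReal_rollingFunction_lt (hK : IsCompact K) (hKconv : Convex ℝ K)
    (hKint : (interior K).Nonempty) {m : ℕ} (hfin : μH[(m : ℝ)] (frontier K) < ∞) :
    (fun t => (μH[(m : ℝ)].restrict (frontier K)).real {x | rollingFunction K x < t})
      =O[𝓝[>] 0] fun t => t := by
  obtain ⟨p, hp⟩ := hKint
  obtain ⟨ρ, hρ, hball⟩ := nhds_basis_closedBall.mem_iff.1 (mem_interior_iff_mem_nhds.1 hp)
  set ν : Measure (EuclideanSpace ℝ (Fin n)) := μH[(m : ℝ)].restrict (frontier K)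
  have : IsFiniteMeasure ν := ⟨by simpa [ν] using hfin⟩
  refine IsBigO.of_bound (m / ρ * ν.real univ) ?_
  filter_upwards [Ioo_mem_nhdsGT hρ] with t ⟨ht0, htρ⟩
  rw [Real.norm_of_nonneg measureReal_nonneg, Real.norm_of_nonneg ht0.le]
  have htρ' : t / ρ < 1 := (div_lt_one hρ).2 htρ
  have hge : (1 - t / ρ) ^ m * ν.real univ ≤ ν.real {x | t ≤ rollingFunction K x} := by
    have h := rpow_mul_hausdorffMeasure_frontier_le hK hKconv hball ht0 htρ m.cast_nonneg
    rw [inter_comm, ← Measure.restrict_apply' isClosed_frontier.measurableSet,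
      ← Measure.restrict_apply_univ (frontier K)] at h
    simpa only [Measure.real, ENNReal.toReal_mul, ENNReal.rpow_natCast, ENNReal.toReal_pow,
      ENNReal.toReal_ofReal (sub_pos.2 htρ').le] using ENNReal.toReal_mono (measure_ne_top ν _) h
  have hbernoulli : 1 + m * -(t / ρ) ≤ (1 + -(t / ρ)) ^ m :=
    one_add_mul_le_pow (by linarith) m
  have hcompl : {x | rollingFunction K x < t} = {x | t ≤ rollingFunction K x}ᶜ := by
    ext x; simp
  calc ν.real {x | rollingFunction K x < t}
      = ν.real univ - ν.real {x | t ≤ rollingFunction K x} := by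
        rw [hcompl, measureReal_compl₀
          (nullMeasurableSet_le aemeasurable_const (aemeasurable_rollingFunction hK _))]
    _ ≤ ν.real univ - (1 + m * -(t / ρ)) * ν.real univ := by
        gcongr
        exact (mul_le_mul_of_nonneg_right hbernoulli measureReal_nonneg).trans hge
    _ = m / ρ * ν.real univ * t := by ring

end RollingFunction

theorem rollingFunction_rpow_integrable_general {n : ℕ} {K : Set (EuclideanSpace ℝ (Fin n))}
    (hK : IsCompact K) (hKconv : Convex ℝ K) (hKint : (interior K).Nonempty) {α : ℝ} (hα : α < 1) :
    IntegrableOn (fun x => rollingFunction K x ^ (-α)) (frontier K) (μH[(n : ℝ) - 1]) ∧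
    ∀ᵐ x ∂((μH[(n : ℝ) - 1] : Measure (EuclideanSpace ℝ (Fin n))).restrict (frontier K)),
      0 < rollingFunction K x := by
  rcases n with _ | m
  · -- In dimension zero every frontier is empty.
    simp
  rw [Nat.cast_succ, add_sub_cancel_right]
  have hfin := hausdorffMeasure_frontier_lt_top hK hKconv hKint
  have : IsFiniteMeasure (μH[(m : ℝ)].restrict (frontier K)) := ⟨by simpa using hfin⟩
  have htail : (fun t => (μH[(m : ℝ)].restrict (frontier K)).real {x | rollingFunction K x < t})
      =O[𝓝[>] 0] fun t => t ^ (1 : ℝ) := by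
    simpa only [Real.rpow_one] using isBigO_measureReal_rollingFunction_lt hK hKconv hKint hfin
  refine ⟨?_, ae_pos_of_isBigO_measureReal_lt one_pos htail⟩
  have hmeas := aemeasurable_rollingFunction hK (μH[(m : ℝ)])
  rcases le_or_gt α 0 with hα0 | hα0
  · refine Integrable.of_bound (hmeas.pow_const _).aestronglyMeasurable (diam K ^ (-α)) ?_
    filter_upwards [ae_restrict_mem isClosed_frontier.measurableSet] with x hx
    rw [Real.norm_of_nonneg (Real.rpow_nonneg (rollingFunction_nonneg K x) _)]
    exact Real.rpow_le_rpow (rollingFunction_nonneg K x)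
      (rollingFunction_le_diam hK (hK.isClosed.frontier_subset hx)) (neg_nonneg.2 hα0)
  · exact integrable_rpow_neg_of_isBigO_measureReal_lt hmeas htail hα0 hα

/-- For a convex body `K` containing the unit ball and `0 ≤ α < 1`, the function
`r^{-α}` is integrable on `∂K` with respect to the `(n−1)`-dimensional Hausdorff
measure, and `r > 0` almost everywhere on `∂K`. -/
theorem rollingFunction_rpow_integrable {n : ℕ}
    (K : Set (EuclideanSpace ℝ (Fin n))) (hKcomp : IsCompact K) (hKconv : Convex ℝ K)
    (hKball : Metric.closedBall (0 : EuclideanSpace ℝ (Fin n)) 1 ⊆ K)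
    (α : ℝ) (hα0 : 0 ≤ α) (hα1 : α < 1) :
    IntegrableOn (fun x => rollingFunction K x ^ (-α)) (frontier K)
      (μH[(n : ℝ) - 1]) ∧
    ∀ᵐ x ∂((μH[(n : ℝ) - 1] : Measure (EuclideanSpace ℝ (Fin n))).restrict (frontier K)),
      0 < rollingFunction K x :=
  rollingFunction_rpow_integrable_general hKcomp hKconv
    ⟨0, interior_mono hKball (by simp [interior_closedBall])⟩ hα1
end
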